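/- arXiv:0707.1975 — 2 statements merged into one kernel-verified Lean document; each statement's English description precedes it below -/
import Mathlib

section
/- Let n be a positive integer and A = {a ∈ {1,...,n} : gcd(a,n) = 1}. Then d_A(Z/nZ) = 1 + Ω(n), where Ω(n) is the number of prime factors of n counted with multiplicity. -/
/-- A sequence `g` admits a nonempty subsequence with a zero linear combination
with coefficients drawn from `A` (with repetition allowed). -/
def hasZeroComb {G : Type*} [AddCommGroup G] (A : Finset ℕ) {k : ℕ} (g : Fin k → G) : Prop :=
  ∃ s : Finset (Fin k), s.Nonempty ∧ ∃ a : Fin k → ℕ,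
    (∀ i ∈ s, a i ∈ A) ∧ ∑ i ∈ s, a i • g i = 0

/-- Parity of an integer sum. -/
lemma odd_int_sum {ι : Type*} [DecidableEq ι] (s : Finset ι) (h : ι → ℤ) :
    Odd (∑ i ∈ s, h i) ↔ Odd (s.filter (fun i => Odd (h i))).card := by
  induction s using Finset.induction_on with
  | empty => simp
  | insert i s hi ih =>
    rw [Finset.sum_insert hi, Finset.filter_insert, Int.odd_add]
    by_cases hh : Odd (h i)
    · have hni : i ∉ s.filter (fun i => Odd (h i)) := by simp [hi]
      rw [if_pos hh, Finset.card_insert_of_notMem hni, Nat.odd_add_one, ← ih]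
      simp [hh]
    · rw [if_neg hh, ← ih]
      simp [hh]

/-- Coefficients for a prime power modulus: reduced case. -/
lemma unit_comb_reduced {ι : Type*} [DecidableEq ι] (p a : ℕ) (hp : p.Prime) (s : Finset ι)
    (h : ι → ℤ) (hev : Even (s.filter (fun i => ¬ (p : ℤ) ∣ h i)).card)
    (hne : ∃ i ∈ s, ¬ (p : ℤ) ∣ h i) :
    ∃ x : ι → ℤ, (∀ i, ¬ (p : ℤ) ∣ x i) ∧ ((p : ℤ) ^ a) ∣ ∑ i ∈ s, x i * h i := by
  have hpi : Prime (p : ℤ) := Nat.prime_iff_prime_int.mp hp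
  obtain ⟨i0, hi0, hd0⟩ := hne
  -- coefficients for the remaining elements
  have key : ∃ y : ι → ℤ, (∀ i, ¬ (p : ℤ) ∣ y i) ∧ ¬ (p : ℤ) ∣ ∑ i ∈ s.erase i0, y i * h i := by
    by_cases h1 : (p : ℤ) ∣ ∑ i ∈ s.erase i0, h i
    · set T := s.filter (fun i => ¬ (p : ℤ) ∣ h i) with hT
      have hi0T : i0 ∈ T := by simp [hT, hi0, hd0]
      have hcard : 1 < T.card := by
        have : 0 < T.card := Finset.card_pos.mpr ⟨i0, hi0T⟩
        rcases hev with ⟨r, hr⟩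
        omega
      obtain ⟨i1, hi1, hne1⟩ := Finset.exists_mem_ne hcard i0
      have hi1s : i1 ∈ s ∧ ¬ (p : ℤ) ∣ h i1 := by simpa [hT] using hi1
      have hmem : i1 ∈ s.erase i0 := Finset.mem_erase.mpr ⟨hne1, hi1s.1⟩
      rcases hp.eq_two_or_odd' with h2 | hodd
      · exfalso
        subst h2
        have e1 : Even (∑ i ∈ s.erase i0, h i) := even_iff_two_dvd.mpr (by exact_mod_cast h1)
        have e2 : ¬ Even (∑ i ∈ s, h i) := by
          rw [← Finset.add_sum_erase s h hi0, Int.even_add]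
          have : ¬ Even (h i0) := fun hh => hd0 (by exact_mod_cast even_iff_two_dvd.mp hh)
          tauto
        rw [Int.not_even_iff_odd, odd_int_sum] at e2
        have e3 : T = s.filter (fun i => Odd (h i)) := by
          rw [hT]
          apply Finset.filter_congr
          intro i _
          rw [← Int.not_even_iff_odd, even_iff_two_dvd]
          norm_num
        rw [← e3] at e2
        exact (Nat.not_even_iff_odd.mpr e2) hev
      · have hp2 : ¬ (p : ℤ) ∣ 2 := by
          intro hh
          have : p ∣ 2 := by exact_mod_cast hh
          have := (Nat.prime_dvd_prime_iff_eq hp Nat.prime_two).mp this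
          subst this
          exact absurd hodd (by decide)
        refine ⟨fun i => if i = i1 then 2 else 1, ?_, ?_⟩
        · intro i
          by_cases hi : i = i1
          · simpa [hi] using hp2
          · simpa [hi] using hpi.not_dvd_one
        · have : ∑ i ∈ s.erase i0, (if i = i1 then (2 : ℤ) else 1) * h i
              = ∑ i ∈ s.erase i0, h i + h i1 := by
            rw [← Finset.add_sum_erase _ _ hmem, ← Finset.add_sum_erase _ h hmem]
            rw [Finset.sum_congr rfl (g := h)]
            · simp; ring
            · intro i hi
              simp [(Finset.mem_erase.mp hi).1]
          rw [this]
          intro hh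
          exact hi1s.2 ((dvd_add_right h1).mp hh)
    · exact ⟨fun _ => 1, fun _ => hpi.not_dvd_one, by simpa using h1⟩
  obtain ⟨y, hy, hS⟩ := key
  set S := ∑ i ∈ s.erase i0, y i * h i with hSdef
  have hcop : IsCoprime (h i0) ((p : ℤ) ^ a) :=
    (((Prime.coprime_iff_not_dvd hpi).mpr hd0).symm).pow_right
  have hcop1 : IsCoprime (h i0) ((p : ℤ) ^ (a + 1)) :=
    (((Prime.coprime_iff_not_dvd hpi).mpr hd0).symm).pow_right
  obtain ⟨u, v, huv⟩ := hcop1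
  refine ⟨fun i => if i = i0 then - u * S else y i, ?_, ?_⟩
  · intro i
    by_cases hi : i = i0
    · simp only [hi, if_true]
      intro hh
      rcases hpi.dvd_or_dvd hh with h3 | h3
      · apply hpi.not_dvd_one
        rw [← huv]
        refine dvd_add (Dvd.dvd.mul_right ((dvd_neg).mp h3) _) ?_
        exact Dvd.dvd.mul_left (dvd_pow_self _ (by omega)) _
      · exact hS h3
    · simpa [hi] using hy i
  · rw [← Finset.add_sum_erase _ _ hi0]
    have : ∑ i ∈ s.erase i0, (if i = i0 then - u * S else y i) * h i = S := by
      rw [hSdef]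
      apply Finset.sum_congr rfl
      intro i hi
      simp [(Finset.mem_erase.mp hi).1]
    rw [this]
    refine ⟨v * p * S, ?_⟩
    simp only [if_true]
    have : u * h i0 = 1 - v * (p : ℤ) ^ (a + 1) := by linarith
    linear_combination (-S) * this

/-- The parity condition gives unit coefficients. -/
lemma unit_comb {ι : Type*} [DecidableEq ι] (s : Finset ι) (g : ι → ℤ) (n : ℕ) (hn : 0 < n) :
    (∀ p j : ℕ, p.Prime → p ^ (j + 1) ∣ n →
      Even (s.filter (fun i => (p : ℤ) ^ j ∣ g i ∧ ¬ (p : ℤ) ^ (j + 1) ∣ g i)).card) →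
    ∃ x : ι → ℤ, (∀ i, IsCoprime (x i) (n : ℤ)) ∧ (n : ℤ) ∣ ∑ i ∈ s, x i * g i := by
  induction n using Nat.recOnPosPrimePosCoprime with
  | zero => omega
  | one => exact fun _ => ⟨fun _ => 1, fun _ => isCoprime_one_left, by simp⟩
  | prime_pow p a hp ha =>
    intro H
    have hpi : Prime (p : ℤ) := Nat.prime_iff_prime_int.mp hp
    by_cases hall : ∀ i ∈ s, (p : ℤ) ^ a ∣ g i
    · refine ⟨fun _ => 1, fun _ => isCoprime_one_left, ?_⟩
      push_cast
      exact Finset.dvd_sum fun i hi => by simpa using hall i hi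
    · have hex : ∃ j, ∃ i ∈ s, ¬ (p : ℤ) ^ (j + 1) ∣ g i := by
        push Not at hall
        obtain ⟨i, hi, hd⟩ := hall
        exact ⟨a - 1, i, hi, by rwa [Nat.sub_add_cancel ha]⟩
      classical
      set v := Nat.find hex with hv
      obtain ⟨i0, hi0, hd0⟩ := Nat.find_spec hex
      rw [← hv] at hd0
      have hva : v + 1 ≤ a := by
        by_contra hcon
        have hall' := hall
        push Not at hall'
        obtain ⟨i, hi, hd⟩ := hall'
        have : v ≤ a - 1 := Nat.find_min' hex ⟨i, hi, by rwa [Nat.sub_add_cancel ha]⟩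
        omega
      have hdiv : ∀ i ∈ s, (p : ℤ) ^ v ∣ g i := by
        intro i hi
        rcases Nat.eq_zero_or_pos v with h0 | h0
        · simp [h0]
        · have := Nat.find_min hex (m := v - 1) (by omega)
          push Not at this
          have := this i hi
          rwa [Nat.sub_add_cancel h0] at this
      have hpv : (p : ℤ) ^ v ≠ 0 := pow_ne_zero _ hpi.ne_zero
      let h : ι → ℤ := fun i => g i / (p : ℤ) ^ v
      have hg : ∀ i ∈ s, g i = (p : ℤ) ^ v * h i := fun i hi =>
        (Int.mul_ediv_cancel' (hdiv i hi)).symm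
      have hiff : ∀ i ∈ s, ((p : ℤ) ^ (v + 1) ∣ g i ↔ (p : ℤ) ∣ h i) := by
        intro i hi
        rw [hg i hi, pow_succ]
        exact mul_dvd_mul_iff_left hpv
      have hE := H p v hp (pow_dvd_pow p hva)
      have hfil : s.filter (fun i => (p : ℤ) ^ v ∣ g i ∧ ¬ (p : ℤ) ^ (v + 1) ∣ g i)
          = s.filter (fun i => ¬ (p : ℤ) ∣ h i) := by
        apply Finset.filter_congr
        intro i hi
        rw [hiff i hi]
        simp [hdiv i hi]
      rw [hfil] at hE
      obtain ⟨x, hx, hxs⟩ := unit_comb_reduced p a hp s h hE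
        ⟨i0, hi0, fun hh => hd0 ((hiff i0 hi0).mpr hh)⟩
      refine ⟨x, ?_, ?_⟩
      · intro i
        push_cast
        exact (((Prime.coprime_iff_not_dvd hpi).mpr (hx i)).symm).pow_right
      · have : ∑ i ∈ s, x i * g i = (p : ℤ) ^ v * ∑ i ∈ s, x i * h i := by
          rw [Finset.mul_sum]
          apply Finset.sum_congr rfl
          intro i hi
          rw [hg i hi]; ring
        rw [this]
        push_cast
        exact Dvd.dvd.mul_left hxs _
  | coprime m k hm hk hmk ihm ihk =>
    intro H
    obtain ⟨x, hx, hxs⟩ := ihm (by omega) (fun p j hp hd => H p j hp (hd.mul_right _))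
    obtain ⟨y, hy, hys⟩ := ihk (by omega) (fun p j hp hd => H p j hp (hd.mul_left _))
    have hc : IsCoprime (m : ℤ) (k : ℤ) := Nat.isCoprime_iff_coprime.mpr hmk
    obtain ⟨u, w, huw⟩ := id hc
    -- u * m + w * k = 1
    let z : ι → ℤ := fun i => x i * (w * k) + y i * (u * m)
    have hzx : ∀ i, z i = x i + (y i - x i) * u * m := fun i => by
      simp only [z]; linear_combination x i * huw
    have hzy : ∀ i, z i = y i + (x i - y i) * w * k := fun i => by
      simp only [z]; linear_combination y i * huw
    refine ⟨z, ?_, ?_⟩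
    · intro i
      push_cast
      apply IsCoprime.mul_right
      · rw [hzx i]; exact (IsCoprime.add_mul_right_left_iff).mpr (hx i)
      · rw [hzy i]; exact (IsCoprime.add_mul_right_left_iff).mpr (hy i)
    · push_cast
      apply hc.mul_dvd
      · have : ∑ i ∈ s, z i * g i
            = ∑ i ∈ s, x i * g i + (m : ℤ) * ∑ i ∈ s, (y i - x i) * u * g i := by
          rw [Finset.mul_sum, ← Finset.sum_add_distrib]
          exact Finset.sum_congr rfl fun i _ => by rw [hzx i]; ring
        rw [this]
        exact dvd_add hxs (dvd_mul_right _ _)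
      · have : ∑ i ∈ s, z i * g i
            = ∑ i ∈ s, y i * g i + (k : ℤ) * ∑ i ∈ s, (x i - y i) * w * g i := by
          rw [Finset.mul_sum, ← Finset.sum_add_distrib]
          exact Finset.sum_congr rfl fun i _ => by rw [hzy i]; ring
        rw [this]
        exact dvd_add hys (dvd_mul_right _ _)

/-- Linear algebra over `ZMod 2`: more elements than parity conditions. -/
lemma exists_even_subset {ι κ : Type*} [Fintype ι] [Fintype κ]
    (hlt : Fintype.card κ < Fintype.card ι) (R : κ → ι → Prop) [∀ k i, Decidable (R k i)] :
    ∃ s : Finset ι, s.Nonempty ∧ ∀ k, Even (s.filter (fun i => R k i)).card := by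
  classical
  have : Fact (Nat.Prime 2) := ⟨Nat.prime_two⟩
  have h01 : ∀ c : ZMod 2, c ≠ 0 → c = 1 := by decide +revert
  let M : Matrix κ ι (ZMod 2) := Matrix.of fun k i => if R k i then 1 else 0
  have hker : LinearMap.ker M.mulVecLin ≠ ⊥ :=
    LinearMap.ker_ne_bot_of_finrank_lt (by simpa using hlt)
  obtain ⟨x, hx, hx0⟩ := (Submodule.ne_bot_iff _).mp hker
  refine ⟨Finset.univ.filter (fun i => x i ≠ 0), ?_, ?_⟩
  · obtain ⟨i, hi⟩ := Function.ne_iff.mp hx0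
    exact ⟨i, by simpa using hi⟩
  · intro k
    have h0 : M.mulVec x = 0 := by simpa using hx
    have hk := congrFun h0 k
    rw [← ZMod.natCast_eq_zero_iff_even]
    rw [Finset.filter_filter, Finset.card_filter]
    push_cast
    refine Eq.trans ?_ (show M.mulVec x k = 0 from hk)
    unfold Matrix.mulVec dotProduct
    apply Finset.sum_congr rfl
    intro i _
    by_cases hxi : x i = 0
    · simp [hxi]
    · simp [M, h01 _ hxi]

theorem stmt12 {n : ℕ} (hn : 0 < n) (A : Finset ℕ)
    (hA : ∀ a, a ∈ A ↔ a ∈ Finset.Icc 1 n ∧ Nat.Coprime a n) :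
    IsLeast {t : ℕ | ∀ g : Fin t → ZMod n, hasZeroComb A g}
      (1 + n.primeFactorsList.length) := by
  have : NeZero n := ⟨hn.ne'⟩
  constructor
  · intro g
    let G : Fin (1 + n.primeFactorsList.length) → ℤ := fun i => ((g i).val : ℤ)
    have hG : ∀ i, ((G i : ℤ) : ZMod n) = g i := fun i => by simp [G]
    let κ := Finset.sigma n.primeFactors (fun p => Finset.range (n.factorization p))
    have hcard : Fintype.card κ = n.primeFactorsList.length := by
      rw [Fintype.card_coe, Finset.card_sigma]
      simp only [Finset.card_range]
      have := ArithmeticFunction.cardFactors_eq_sum_factorization (n := n)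
      rw [← ArithmeticFunction.cardFactors_apply, this]
      rfl
    classical
    obtain ⟨s, hs, hE⟩ := exists_even_subset (ι := Fin (1 + n.primeFactorsList.length)) (κ := κ)
      (by rw [hcard, Fintype.card_fin]; omega)
      (fun k i => (k.1.1 : ℤ) ^ k.1.2 ∣ G i ∧ ¬ (k.1.1 : ℤ) ^ (k.1.2 + 1) ∣ G i)
    obtain ⟨x, hx, hxs⟩ := unit_comb s G n hn (by
      intro p j hp hd
      have hj : j + 1 ≤ n.factorization p := (hp.pow_dvd_iff_le_factorization hn.ne').mp hd
      have hpn : p ∣ n := (dvd_pow_self p (by omega)).trans hd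
      have hmem : (⟨p, j⟩ : Σ _ : ℕ, ℕ) ∈ κ := by
        simp only [κ, Finset.mem_sigma, Finset.mem_range, Nat.mem_primeFactors]
        exact ⟨⟨hp, hpn, hn.ne'⟩, by omega⟩
      convert hE ⟨⟨p, j⟩, hmem⟩)
    have hn' : (0 : ℤ) < n := by exact_mod_cast hn
    let b : Fin (1 + n.primeFactorsList.length) → ℕ := fun i => ((x i - 1) % (n : ℤ)).toNat + 1
    have hb : ∀ i, (b i : ℤ) = (x i - 1) % (n : ℤ) + 1 := fun i => by
      simp only [b]
      push_cast
      rw [Int.toNat_of_nonneg (Int.emod_nonneg _ hn'.ne')]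
    have hb' : ∀ i, (b i : ℤ) = x i + (-((x i - 1) / (n : ℤ))) * n := fun i => by
      rw [hb]
      linarith [Int.emod_add_mul_ediv (x i - 1) n]
    refine ⟨s, hs, b, ?_, ?_⟩
    · intro i _
      rw [hA, Finset.mem_Icc]
      refine ⟨⟨by simp [b], ?_⟩, ?_⟩
      · have := Int.emod_lt_of_pos (x i - 1) hn'
        have := hb i
        omega
      · rw [← Nat.isCoprime_iff_coprime, hb' i]
        exact (IsCoprime.add_mul_right_left_iff).mpr (hx i)
    · have h1 : ((∑ i ∈ s, x i * G i : ℤ) : ZMod n) = 0 :=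
        (ZMod.intCast_zmod_eq_zero_iff_dvd _ n).mpr hxs
      rw [← h1]
      push_cast
      apply Finset.sum_congr rfl
      intro i _
      rw [hG i, nsmul_eq_mul]
      congr 1
      have := congrArg (fun z : ℤ => (z : ZMod n)) (hb' i)
      simpa using this
  · intro t ht
    by_contra hcon
    set l := n.primeFactorsList with hl
    have htl : t ≤ l.length := by omega
    let P : ℕ → ℕ := fun i => (l.take i).prod
    have hPpos : ∀ i, 0 < P i := fun i => by
      apply Nat.pos_of_ne_zero
      intro h0
      have := List.prod_eq_zero_iff.mp h0
      have := Nat.prime_of_mem_primeFactorsList (List.mem_of_mem_take this)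
      exact Nat.not_prime_zero this
    have hPmono : ∀ i j, i ≤ j → P i ∣ P j := fun i j hij =>
      ((List.take_prefix_take_left hij).sublist).prod_dvd_prod
    have hPn : ∀ i, P i ∣ n := fun i => by
      have h1 : P i ∣ l.prod := ((List.take_prefix i l).sublist).prod_dvd_prod
      rwa [hl, Nat.prod_primeFactorsList hn.ne'] at h1
    obtain ⟨s, hs, a, ha, hsum⟩ := ht (fun i => ((P i : ℕ) : ZMod n))
    have hdvd : n ∣ ∑ i ∈ s, a i * P i := by
      rw [← ZMod.natCast_eq_zero_iff]
      push_cast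
      rw [← hsum]
      exact Finset.sum_congr rfl fun i _ => by rw [nsmul_eq_mul]
    set i0 := s.min' hs with hi0
    have hi0s : i0 ∈ s := Finset.min'_mem s hs
    have hlt : (i0 : ℕ) < l.length := lt_of_lt_of_le i0.2 htl
    have h1 : P (i0 + 1) ∣ ∑ i ∈ s, a i * P i := (hPn _).trans hdvd
    rw [← Finset.add_sum_erase s _ hi0s] at h1
    have h2 : P (i0 + 1) ∣ ∑ i ∈ s.erase i0, a i * P i := by
      apply Finset.dvd_sum
      intro i hi
      obtain ⟨hne, his⟩ := Finset.mem_erase.mp hi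
      have hle : i0 ≤ i := Finset.min'_le s i his
      have : i0 < i := lt_of_le_of_ne hle (Ne.symm hne)
      exact Dvd.dvd.mul_left (hPmono _ _ this) _
    have h3 : P (i0 + 1) ∣ a i0 * P i0 := (Nat.dvd_add_iff_left h2).mpr h1
    have h4 : P (i0 + 1) = l[(i0 : ℕ)] * P i0 := by
      simp only [P]
      rw [List.prod_take_succ l i0 hlt, mul_comm]
    rw [h4] at h3
    have h5 : l[(i0 : ℕ)] ∣ a i0 := Nat.dvd_of_mul_dvd_mul_right (hPpos _) h3
    have hmem : l[(i0 : ℕ)] ∈ n.primeFactorsList := List.getElem_mem hlt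
    have hpr := Nat.prime_of_mem_primeFactorsList hmem
    have hdn := Nat.dvd_of_mem_primeFactorsList hmem
    have hco := ((hA _).mp (ha i0 hi0s)).2
    exact Nat.not_coprime_of_dvd_of_dvd hpr.one_lt h5 hdn hco
end

section
/- Let d ≥ 1 and p ≡ 3 (mod 4) a prime with p ≥ 2d+1. Let A_5 ⊆ {1,...,p-1} with |A_5| = (p-1)/2 and x ∈ A_5 ⟹ p-x ∉ A_5. Then ZS_{A_5}((Z/pZ)^d) = 2d + p^d. -/
/-- A sequence `g` admits a subsequence of length exactly `m` with a zero linear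
combination with coefficients drawn from `A`. -/
def hasZeroCombLen {G : Type*} [AddCommGroup G] (A : Finset ℕ) (m : ℕ) {k : ℕ} (g : Fin k → G) : Prop :=
  ∃ s : Finset (Fin k), s.card = m ∧ ∃ a : Fin k → ℕ,
    (∀ i ∈ s, a i ∈ A) ∧ ∑ i ∈ s, a i • g i = 0

open MvPolynomial in
lemma coeff_grid {σ F : Type*} [Fintype σ] [Field F] (A : Finset F) :
    coeff (Finsupp.equivFunOnFinite.symm fun _ : σ => A.card)
      (∏ i : σ, ∏ a ∈ A, (X i - C a) : MvPolynomial σ F) = 1 := by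
  classical
  let _ : LinearOrder σ := WellOrderingRel.isWellOrder.linearOrder
  have h := MonomialOrder.coeff_prod_sum_degree (m := MonomialOrder.lex (σ := σ))
    (P := fun q : σ × F => (X q.1 - C q.2 : MvPolynomial σ F)) (Finset.univ ×ˢ A)
  rw [Finset.prod_product, Finset.sum_product] at h
  simp only [MonomialOrder.degree_X_sub_C, Finset.prod_product] at h
  have h2 : (Finsupp.equivFunOnFinite.symm fun _ : σ => A.card)
      = ∑ x : σ, ∑ y ∈ A, Finsupp.single x 1 := by
    ext j
    simp [Finsupp.finsetSum_apply, Finsupp.single_apply]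
  rw [h2, h]
  refine Finset.prod_eq_one fun i _ => Finset.prod_eq_one fun a _ => ?_
  exact MonomialOrder.monic_X_sub_C _ i a

open MvPolynomial in
lemma punct {σ F : Type*} [Fintype σ] [Field F] [DecidableEq F] (A : Finset F) (h0 : (0 : F) ∉ A)
    (P : MvPolynomial σ F) (hdeg : P.totalDegree < Fintype.card σ * A.card)
    (hP : eval 0 P ≠ 0) :
    ∃ x : σ → F, x ≠ 0 ∧ (∀ i, x i ∈ insert 0 A) ∧ eval x P ≠ 0 := by
  classical
  set W : MvPolynomial σ F := ∏ i : σ, ∏ a ∈ A, (X i - C a) with hW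
  set t : σ →₀ ℕ := Finsupp.equivFunOnFinite.symm fun _ : σ => A.card with ht
  have htd : t.degree = Fintype.card σ * A.card := by
    simp [ht, Finsupp.degree_eq_sum]
  have hW0 : eval 0 W ≠ 0 := by
    simp only [hW, map_prod]
    refine Finset.prod_ne_zero_iff.2 fun i _ => Finset.prod_ne_zero_iff.2 fun a ha => ?_
    simp only [map_sub, eval_X, eval_C, Pi.zero_apply, zero_sub, neg_ne_zero]
    rintro rfl; exact h0 ha
  have hWd : W.totalDegree ≤ Fintype.card σ * A.card := by
    refine (totalDegree_finsetProd _ _).trans ?_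
    refine (Finset.sum_le_card_nsmul _ _ A.card fun i _ => ?_).trans (by simp)
    refine (totalDegree_finsetProd _ _).trans ?_
    refine (Finset.sum_le_card_nsmul _ _ 1 fun a _ => ?_).trans (by simp)
    exact (totalDegree_sub_C_le _ _).trans (by simp)
  set c : F := eval 0 P / eval 0 W with hc
  have hc0 : c ≠ 0 := div_ne_zero hP hW0
  have hcoef : coeff t (P - C c * W) ≠ 0 := by
    rw [coeff_sub, coeff_C_mul, coeff_grid, coeff_eq_zero_of_totalDegree_lt]
    · simpa using hc0
    · rw [← Finsupp.degree_apply, htd]; exact hdeg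
  have htot : (P - C c * W).totalDegree = t.degree := by
    apply le_antisymm
    · refine (totalDegree_sub _ _).trans (max_le (by omega) ?_)
      refine (totalDegree_mul _ _).trans ?_
      rw [totalDegree_C, htd]; omega
    · have := le_totalDegree (mem_support_iff.2 hcoef)
      exact this
  obtain ⟨x, hx, hne⟩ := combinatorial_nullstellensatz_exists_eval_nonzero _ t hcoef htot
    (fun _ => insert 0 A) (fun i => by simp [ht, Finset.card_insert_of_notMem h0])
  have hx0 : x ≠ 0 := by
    rintro rfl
    apply hne
    simp only [map_sub, map_mul, eval_C, hc]
    field_simp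
    simp
  refine ⟨x, hx0, hx, ?_⟩
  obtain ⟨i, hi⟩ := Function.ne_iff.1 hx0
  have hWx : eval x W = 0 := by
    simp only [hW, map_prod]
    refine Finset.prod_eq_zero (Finset.mem_univ i) ?_
    have : x i ∈ A := by
      have := hx i
      simp only [Finset.mem_insert] at this
      exact this.resolve_left hi
    exact Finset.prod_eq_zero this (by simp)
  simpa [hWx] using hne

open MvPolynomial in
lemma block0 {σ : Type*} [Fintype σ] {p d : ℕ} [Fact p.Prime] (A : Finset (ZMod p))
    (h0 : (0 : ZMod p) ∉ A) (hA : 2 * A.card + 1 = p) (hd : 2 * d + 1 ≤ p)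
    (hA0 : 0 < A.card)
    (hσ : Fintype.card σ = 2 * d + p) (g : σ → Fin d → ZMod p) :
    ∃ x : σ → ZMod p, (∀ i, x i ∈ insert 0 A) ∧ (∑ i, x i • g i = 0) ∧
      (Finset.univ.filter fun i => x i ≠ 0).card = p := by
  classical
  set e : ZMod p := ∏ a ∈ A, (0 - a) with he
  have he0 : e ≠ 0 := by
    refine Finset.prod_ne_zero_iff.2 fun a ha => ?_
    simp only [zero_sub, neg_ne_zero]
    rintro rfl; exact h0 ha
  set u : σ → MvPolynomial σ (ZMod p) := fun i => 1 - C e⁻¹ * ∏ a ∈ A, (X i - C a) with hu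
  have hud : ∀ i, (u i).totalDegree ≤ A.card := by
    intro i
    refine (totalDegree_sub _ _).trans (max_le (by simp) ?_)
    refine (totalDegree_mul _ _).trans ?_
    rw [totalDegree_C, zero_add]
    refine (totalDegree_finsetProd _ _).trans ?_
    refine (Finset.sum_le_card_nsmul _ _ 1 fun a _ => ?_).trans (by simp)
    exact (totalDegree_sub_C_le _ _).trans (by simp)
  have hu0 : ∀ (x : σ → ZMod p) i, x i ∈ insert 0 A →
      eval x (u i) = if x i ≠ 0 then 1 else 0 := by
    intro x i hx
    simp only [hu, map_sub, map_one, map_mul, eval_C, map_prod, eval_X]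
    by_cases h : x i = 0
    · simp only [h, ← he]; simp [he0]
    · have : x i ∈ A := by
        simp only [Finset.mem_insert] at hx
        exact hx.resolve_left h
      rw [Finset.prod_eq_zero this (by simp)]
      simp [h]
  set L : Fin d → MvPolynomial σ (ZMod p) := fun j => ∑ i, C (g i j) * X i with hL
  set P : MvPolynomial σ (ZMod p) :=
    (∏ j, (1 - L j ^ (p - 1))) * (1 - (∑ i, u i) ^ (p - 1)) with hP
  have hp1 : p - 1 ≠ 0 := by omega
  have hLd : ∀ j, (L j).totalDegree ≤ 1 := by
    intro j
    refine (totalDegree_finsetSum _ _).trans (Finset.sup_le fun i _ => ?_)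
    refine (totalDegree_mul _ _).trans ?_
    simp
  have hPd : P.totalDegree < Fintype.card σ * A.card := by
    have h1 : (∏ j, (1 - L j ^ (p - 1))).totalDegree ≤ d * (p - 1) := by
      refine (totalDegree_finsetProd _ _).trans ?_
      refine (Finset.sum_le_card_nsmul _ _ (p - 1) fun j _ => ?_).trans (by simp)
      refine (totalDegree_sub _ _).trans (max_le (by simp) ?_)
      refine (totalDegree_pow _ _).trans ?_
      exact (Nat.mul_le_mul_left _ (hLd j)).trans (by simp)
    have h2 : (1 - (∑ i, u i) ^ (p - 1)).totalDegree ≤ (p - 1) * A.card := by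
      refine (totalDegree_sub _ _).trans (max_le (by simp) ?_)
      refine (totalDegree_pow _ _).trans (Nat.mul_le_mul_left _ ?_)
      exact (totalDegree_finsetSum _ _).trans (Finset.sup_le fun i _ => hud i)
    have h3 := totalDegree_mul (∏ j, (1 - L j ^ (p - 1))) (1 - (∑ i, u i) ^ (p - 1))
    rw [← hP] at h3
    rw [hσ]
    have h4 : p - 1 = 2 * A.card := by omega
    rw [h4] at h1 h2
    have h5 : d * (2 * A.card) + 2 * A.card * A.card < (2 * d + p) * A.card := by
      generalize A.card = c at *
      subst hA
      nlinarith
    rw [h4] at h3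
    rw [h4] at hP
    omega
  have hP0 : eval 0 P ≠ 0 := by
    have : ∀ i, eval 0 (u i) = 0 := fun i => by
      rw [hu0 0 i (by simp)]; simp
    rw [hP, map_mul, map_prod]
    refine mul_ne_zero (Finset.prod_ne_zero_iff.2 fun j _ => ?_) ?_
    · simp [hL, hp1]
    · rw [map_sub, map_pow, map_sum, Finset.sum_eq_zero fun i _ => this i]
      simp [hp1]
  obtain ⟨x, hx0, hx, hne⟩ := punct A h0 P hPd hP0
  rw [hP, map_mul, mul_ne_zero_iff, map_prod, Finset.prod_ne_zero_iff] at hne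
  have key : ∀ y : ZMod p, 1 - y ^ (p - 1) ≠ 0 → y = 0 := by
    intro y hy
    by_contra h
    exact hy (by rw [ZMod.pow_card_sub_one_eq_one h, sub_self])
  refine ⟨x, hx, ?_, ?_⟩
  · ext j
    have := key _ (by simpa using hne.1 j (Finset.mem_univ j))
    simp only [hL, map_sum, map_mul, eval_C, eval_X] at this
    simp only [Finset.sum_apply, Pi.smul_apply, smul_eq_mul, Pi.zero_apply]
    rw [← this]
    exact Finset.sum_congr rfl fun i _ => mul_comm _ _
  · have := key _ (by simpa using hne.2)
    rw [Finset.sum_congr rfl fun i _ => hu0 x i (hx i), Finset.sum_boole] at this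
    rw [ZMod.natCast_eq_zero_iff] at this
    obtain ⟨k, hk⟩ := this
    have hle : (Finset.univ.filter fun i => x i ≠ 0).card ≤ 2 * d + p := by
      rw [← hσ]; exact Finset.card_le_univ _
    have hpos : 0 < (Finset.univ.filter fun i => x i ≠ 0).card := by
      obtain ⟨i, hi⟩ := Function.ne_iff.1 hx0
      exact Finset.card_pos.2 ⟨i, by simpa using hi⟩
    rw [hk] at hle hpos ⊢
    have : k < 2 := by
      by_contra h
      have : p * 2 ≤ p * k := Nat.mul_le_mul_left _ (by omega)
      omega
    have : k ≠ 0 := by rintro rfl; simp at hpos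
    have : k = 1 := by omega
    simp [this]

lemma block1 {ι : Type*} [DecidableEq ι] {p d : ℕ} (hp : p.Prime) (hd : 1 ≤ d)
    (hpd : 2 * d + 1 ≤ p) (A5 : Finset ℕ) (hsub : A5 ⊆ Finset.Icc 1 (p - 1))
    (hcard : 2 * A5.card + 1 = p) (g : ι → Fin d → ZMod p) (S : Finset ι)
    (hS : 2 * d + p ≤ S.card) :
    ∃ s ⊆ S, s.card = p ∧ ∃ a : ι → ℕ, (∀ i ∈ s, a i ∈ A5) ∧ ∑ i ∈ s, a i • g i = 0 := by
  classical
  have : Fact p.Prime := ⟨hp⟩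
  obtain ⟨T, hTS, hT⟩ := Finset.exists_subset_card_eq hS
  have hlt : ∀ a ∈ A5, 0 < a ∧ a < p := fun a ha => by
    have := Finset.mem_Icc.1 (hsub ha); omega
  set A : Finset (ZMod p) := A5.image (fun a : ℕ => (a : ZMod p)) with hA
  have hAc : A.card = A5.card := by
    apply Finset.card_image_of_injOn
    intro a ha b hb hab
    have := congrArg ZMod.val hab
    simpa [ZMod.val_cast_of_lt (hlt a ha).2, ZMod.val_cast_of_lt (hlt b hb).2] using this
  have h0 : (0 : ZMod p) ∉ A := by
    intro h
    obtain ⟨a, ha, h⟩ := Finset.mem_image.1 h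
    have := Nat.le_of_dvd (hlt a ha).1 ((ZMod.natCast_eq_zero_iff _ _).1 h)
    have := (hlt a ha).2
    omega
  obtain ⟨x, hx, hs, hc⟩ := block0 (σ := T) A h0 (by omega) hpd (by omega)
    (by simpa using hT) (fun i => g i)
  set y : ι → ZMod p := fun i => if h : i ∈ T then x ⟨i, h⟩ else 0 with hy
  have hyx : ∀ i : T, y i = x i := fun i => by simp [hy]
  refine ⟨T.filter fun i => y i ≠ 0, (Finset.filter_subset _ _).trans hTS, ?_,
    fun i => (y i).val, ?_, ?_⟩
  · refine Eq.trans ?_ hc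
    rw [Finset.card_filter, Finset.card_filter, ← Finset.sum_coe_sort T]
    exact Finset.sum_congr rfl fun i _ => by rw [hyx]
  · intro i hi
    obtain ⟨hiT, hi⟩ := Finset.mem_filter.1 hi
    have h1 := hx ⟨i, hiT⟩
    rw [← hyx] at h1
    have h2 : y i ∈ A := (Finset.mem_insert.1 h1).resolve_left hi
    obtain ⟨a, ha, h⟩ := Finset.mem_image.1 h2
    simp only [← h]
    rwa [ZMod.val_cast_of_lt (hlt a ha).2]
  · rw [Finset.sum_filter, ← Finset.sum_coe_sort T]
    refine Eq.trans ?_ hs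
    refine Finset.sum_congr rfl fun i _ => ?_
    simp only [hyx]
    split_ifs with h
    · ext j; simp
    · push Not at h
      simp [h]

lemma blocks {ι : Type*} [DecidableEq ι] {p d : ℕ} (hp : p.Prime) (hd : 1 ≤ d)
    (hpd : 2 * d + 1 ≤ p) (A5 : Finset ℕ) (hsub : A5 ⊆ Finset.Icc 1 (p - 1))
    (hcard : 2 * A5.card + 1 = p) (g : ι → Fin d → ZMod p) (m : ℕ) (S : Finset ι)
    (hS : 2 * d + m * p ≤ S.card) :
    ∃ s ⊆ S, s.card = m * p ∧
      ∃ a : ι → ℕ, (∀ i ∈ s, a i ∈ A5) ∧ ∑ i ∈ s, a i • g i = 0 := by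
  induction m generalizing S with
  | zero => exact ⟨∅, by simp, by simp, 0, by simp, by simp⟩
  | succ m ih =>
    rw [add_mul, one_mul] at hS
    obtain ⟨s, hsS, hsc, a, ha, hsum⟩ := block1 hp hd hpd A5 hsub hcard g S (by omega)
    obtain ⟨s', hsS', hsc', a', ha', hsum'⟩ := ih (S \ s) (by
      rw [Finset.card_sdiff_of_subset hsS]; omega)
    have hdisj : Disjoint s s' :=
      Finset.disjoint_of_subset_right hsS' Finset.disjoint_sdiff
    refine ⟨s ∪ s', Finset.union_subset hsS (hsS'.trans Finset.sdiff_subset), ?_,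
      fun i => if i ∈ s then a i else a' i, ?_, ?_⟩
    · rw [Finset.card_union_of_disjoint hdisj, hsc, hsc']; ring
    · intro i hi
      dsimp only
      split_ifs with h
      · exact ha i h
      · exact ha' i ((Finset.mem_union.1 hi).resolve_left h)
    · rw [Finset.sum_union hdisj]
      have h1 : ∑ i ∈ s, (if i ∈ s then a i else a' i) • g i = 0 := by
        rw [← hsum]; exact Finset.sum_congr rfl fun i hi => by simp [hi]
      have h2 : ∑ i ∈ s', (if i ∈ s then a i else a' i) • g i = 0 := by
        rw [← hsum']
        exact Finset.sum_congr rfl fun i hi => by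
          simp [Finset.disjoint_right.1 hdisj hi]
      rw [h1, h2, add_zero]


lemma lower_aux {p d t : ℕ} (hp : p.Prime) (A5 : Finset ℕ) (hsub : A5 ⊆ Finset.Icc 1 (p - 1))
    (hsym : ∀ x ∈ A5, p - x ∉ A5) (ht : t < 2 * d + p ^ d) :
    ¬ hasZeroCombLen A5 (p ^ d)
      (fun (k : Fin t) (j : Fin d) => if (k : ℕ) / 2 = j then (1 : ZMod p) else 0) := by
  classical
  rintro ⟨s, hs, a, ha, hsum⟩
  have hpos : 0 < p ^ d := Nat.pow_pos hp.pos
  have hex : ∃ i ∈ s, (i : ℕ) < 2 * d := by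
    by_contra! h
    have h1 : (s.map Fin.valEmbedding) ⊆ Finset.Ico (2 * d) t := by
      intro k hk
      obtain ⟨i, hi, rfl⟩ := Finset.mem_map.1 hk
      exact Finset.mem_Ico.2 ⟨h i hi, i.2⟩
    have h2 := Finset.card_le_card h1
    rw [Finset.card_map, Nat.card_Ico, hs] at h2
    omega
  obtain ⟨i, his, hi⟩ := hex
  have hlt : ∀ k ∈ s, 1 ≤ a k ∧ a k ≤ p - 1 := fun k hk => Finset.mem_Icc.1 (hsub (ha k hk))
  have hj := congrFun hsum ⟨(i : ℕ) / 2, by omega⟩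
  simp only [Finset.sum_apply, Pi.smul_apply, Pi.zero_apply, smul_ite, nsmul_one, smul_zero] at hj
  rw [← Finset.sum_filter, ← Nat.cast_sum, ZMod.natCast_eq_zero_iff] at hj
  set F := s.filter (fun k : Fin t => (k : ℕ) / 2 = (i : ℕ) / 2) with hF
  have hiF : i ∈ F := by simp [hF, his]
  have h1 := hlt i his
  have hp2 := hp.two_le
  by_cases hk : ∃ k ∈ F, k ≠ i
  · obtain ⟨k, hkF, hki⟩ := hk
    have hks := (Finset.mem_filter.1 hkF).1
    have hFe : F = {i, k} := by
      ext l
      simp only [Finset.mem_insert, Finset.mem_singleton]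
      constructor
      · intro hl
        have e1 := (Finset.mem_filter.1 hl).2
        have e2 := (Finset.mem_filter.1 hkF).2
        rw [Fin.ext_iff, Fin.ext_iff]
        have e3 : (k : ℕ) ≠ i := fun h => hki (Fin.ext h)
        omega
      · rintro (rfl | rfl) <;> assumption
    rw [hFe, Finset.sum_pair hki.symm] at hj
    have h2 := hlt k hks
    obtain ⟨c, hc⟩ := hj
    have hc1 : c = 1 := by
      have : c < 2 := by
        by_contra h
        have : p * 2 ≤ p * c := Nat.mul_le_mul_left _ (by omega)
        omega
      have : c ≠ 0 := by rintro rfl; simp at hc; omega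
      omega
    rw [hc1, mul_one] at hc
    apply hsym _ (ha i his)
    have : p - a i = a k := by omega
    rw [this]
    exact ha k hks
  · push Not at hk
    have hFe : F = {i} := by
      ext l
      simp only [Finset.mem_singleton]
      exact ⟨hk l, by rintro rfl; exact hiF⟩
    rw [hFe, Finset.sum_singleton] at hj
    have := Nat.le_of_dvd (by omega) hj
    omega

theorem stmt19 {p d : ℕ} (hp : p.Prime) (hmod : p % 4 = 3) (hd : 1 ≤ d)
    (hpd : 2 * d + 1 ≤ p) (A5 : Finset ℕ) (hsub : A5 ⊆ Finset.Icc 1 (p - 1))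
    (hcard : A5.card = (p - 1) / 2)
    (hsym : ∀ x ∈ A5, p - x ∉ A5) :
    IsLeast {t : ℕ | ∀ g : Fin t → (Fin d → ZMod p),
      hasZeroCombLen A5 (p ^ d) g} (2 * d + p ^ d) := by
  constructor
  · intro g
    have hpow : p ^ (d - 1) * p = p ^ d := by
      rw [← pow_succ]; congr 1; omega
    obtain ⟨s, -, hs, a, ha, hsum⟩ := blocks hp hd hpd A5 hsub (by omega) g (p ^ (d - 1))
      Finset.univ (by rw [hpow]; simp)
    exact ⟨s, by rw [hs, hpow], a, ha, hsum⟩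
  · intro t ht
    by_contra h
    exact lower_aux hp A5 hsub hsym (not_le.1 h) (ht _)
end
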